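/- For every integer M ≥ 2, the optimal exponent satisfies γ_max^{M−1}·(1−γ_max)²/(1−γ_max^M)² ≤ ψ*_M ≤ (M+1)·γ_max^{M−1}/(1−γ_max)². -/

import Mathlib

noncomputable def gammaMin (d : ℕ) (β : ℝ) : ℝ := β / (2 * β + d)

noncomputable def gammaMax (d : ℕ) (β : ℝ) : ℝ := (β + d) / (2 * β + d)

noncomputable def Sset (d : ℕ) (β : ℝ) : Set ℝ := Set.Icc (gammaMin d β) (gammaMax d β)

noncomputable def hFun (M : ℕ) (γ : ℝ) : ℝ := (1 - γ) / (1 - γ ^ M)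

/-- η_1(u,γ) = u_1, η_i(u,γ) = u_i − γ·u_{i−1} for 2 ≤ i ≤ M−1, η_M(u,γ) = 1 − γ·u_{M−1}. -/
noncomputable def etaFun (M : ℕ) (u : ℕ → ℝ) (γ : ℝ) (i : ℕ) : ℝ :=
  if i = 1 then u 1 else if i = M then 1 - γ * u (M - 1) else u i - γ * u (i - 1)

/-- Ψ_M(u,γ) = max_{1≤i≤M} η_i(u,γ) − h_M(γ). -/
noncomputable def PsiFun (M : ℕ) (u : ℕ → ℝ) (γ : ℝ) : ℝ :=
  (⨆ i : Set.Icc 1 M, etaFun M u γ i.1) - hFun M γ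

/-- ψ_M(u) = max( u_1, sup_{γ∈𝒮} Ψ_M(u,γ) ). -/
noncomputable def psiFun (d : ℕ) (β : ℝ) (M : ℕ) (u : ℕ → ℝ) : ℝ :=
  max (u 1) (⨆ γ : Sset d β, PsiFun M u γ.1)

/-- U_M = { u : 0 ≤ u_1 ≤ u_2 ≤ ⋯ ≤ u_{M−1} ≤ 1 } (only coordinates 1,…,M−1 matter). -/
def UM (M : ℕ) : Set (ℕ → ℝ) :=
  {u | 0 ≤ u 1 ∧ u (M - 1) ≤ 1 ∧ ∀ i, 1 ≤ i → i + 1 ≤ M - 1 → u i ≤ u (i + 1)}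

/-- ψ*_M = inf_{u ∈ U_M} ψ_M(u). -/
noncomputable def psiStar (d : ℕ) (β : ℝ) (M : ℕ) : ℝ :=
  sInf (psiFun d β M '' UM M)

/-!
Extend `u` by `u 0 = 0` and `u M = 1`, so that `η i = u i - γ * u (i - 1)` for all `1 ≤ i ≤ M`.
The weighted sum `∑ γ ^ (M - i) * η i` then telescopes to `1`, whereas the weights add up to
`1 / h γ`. With `ψ = ψ_M(u)`, all `η i` are at most `h γ + ψ`, so the weighted slacks
`γ ^ (M - i) * (h γ + ψ - η i)` are nonnegative with sum `ψ / h γ`. As `η 1 = u 1 ≤ ψ`, the first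
of them is at least `γ ^ (M - 1) * h γ`, so `γ ^ (M - 1) * h γ ^ 2 ≤ ψ`; take `γ = γ_max`.

For the upper bound, the choice `u i = 1 - γ_max ^ (i - 1)` gives
`η i ≤ 1 - γ + γ_max ^ (M - 1)` for every `γ ≤ γ_max`, and `1 - γ ≤ h γ`.
-/

lemma sum_range_pow_mul_sub {R : Type*} [CommRing R] (r : R) (v : ℕ → R) (n : ℕ) :
    ∑ i ∈ Finset.range n, r ^ (n - 1 - i) * (v (i + 1) - r * v i) = v n - r ^ n * v 0 := by
  have hterm : ∀ i ∈ Finset.range n, r ^ (n - 1 - i) * (v (i + 1) - r * v i) =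
      r ^ (n - (i + 1)) * v (i + 1) - r ^ (n - i) * v i := by
    intro i hi
    have hin : i < n := Finset.mem_range.1 hi
    rw [show n - (i + 1) = n - 1 - i by omega, show n - i = n - 1 - i + 1 by omega]
    ring
  rw [Finset.sum_congr rfl hterm, Finset.sum_range_sub fun i => r ^ (n - i) * v i,
    Nat.sub_self, Nat.sub_zero, pow_zero, one_mul]

section Parameters

variable {d : ℕ} {β : ℝ}

lemma gammaMin_pos (hβ : 0 < β) : 0 < gammaMin d β := by
  unfold gammaMin
  positivity

lemma gammaMin_le_gammaMax (hβ : 0 < β) : gammaMin d β ≤ gammaMax d β := by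
  unfold gammaMin gammaMax
  gcongr
  exact le_add_of_nonneg_right d.cast_nonneg

lemma gammaMax_pos (hβ : 0 < β) : 0 < gammaMax d β :=
  (gammaMin_pos hβ).trans_le (gammaMin_le_gammaMax hβ)

lemma gammaMax_lt_one (hβ : 0 < β) : gammaMax d β < 1 := by
  unfold gammaMax
  rw [div_lt_one (by positivity)]
  linarith

lemma gammaMax_mem_Sset (hβ : 0 < β) : gammaMax d β ∈ Sset d β :=
  ⟨gammaMin_le_gammaMax hβ, le_rfl⟩

lemma Sset_subset_Ioo (hβ : 0 < β) : Sset d β ⊆ Set.Ioo 0 1 := fun _ hγ =>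
  ⟨(gammaMin_pos hβ).trans_le hγ.1, hγ.2.trans_lt (gammaMax_lt_one hβ)⟩

end Parameters

section Threshold

variable {M : ℕ} {γ : ℝ}

lemma one_sub_le_hFun (hM : M ≠ 0) (h0 : 0 ≤ γ) (h1 : γ < 1) : 1 - γ ≤ hFun M γ :=
  le_div_self (sub_nonneg.2 h1.le) (sub_pos.2 (pow_lt_one₀ h0 h1 hM))
    (sub_le_self _ (pow_nonneg h0 M))

lemma hFun_pos (hM : M ≠ 0) (h0 : 0 ≤ γ) (h1 : γ < 1) : 0 < hFun M γ :=
  (sub_pos.2 h1).trans_le (one_sub_le_hFun hM h0 h1)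

lemma geom_sum_mul_hFun (h : γ ^ M ≠ 1) : (∑ i ∈ Finset.range M, γ ^ i) * hFun M γ = 1 := by
  rw [hFun, ← mul_div_assoc, geom_sum_mul_neg, div_self (sub_ne_zero.2 h.symm)]

end Threshold

section Increments

variable {M : ℕ}

/-- The sequence `0, u 1, …, u (M - 1), 1`. With these boundary values every `etaFun M u γ i`,
`1 ≤ i ≤ M`, is given by the same formula; the values beyond `M` are those of `u`. -/
noncomputable def withBoundary (M : ℕ) (u : ℕ → ℝ) : ℕ → ℝ :=
  Function.update (Function.update u 0 0) M 1

lemma etaFun_succ (hM : 2 ≤ M) (u : ℕ → ℝ) (γ : ℝ) {i : ℕ} (hi : i < M) :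
    etaFun M u γ (i + 1) = withBoundary M u (i + 1) - γ * withBoundary M u i := by
  rcases Nat.eq_zero_or_pos i with rfl | hi0
  · simp [etaFun, withBoundary, show 1 ≠ M by omega, show 0 ≠ M by omega]
  · by_cases hiM : i + 1 = M
    · subst hiM
      simp [etaFun, withBoundary, hi0.ne']
    · simp [etaFun, withBoundary, hi0.ne', hi.ne, hiM]

lemma sum_pow_mul_etaFun (hM : 2 ≤ M) (u : ℕ → ℝ) (γ : ℝ) :
    ∑ i ∈ Finset.range M, γ ^ (M - 1 - i) * etaFun M u γ (i + 1) = 1 := by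
  have hv0 : withBoundary M u 0 = 0 := by simp [withBoundary, show 0 ≠ M by omega]
  have hvM : withBoundary M u M = 1 := by simp [withBoundary]
  calc ∑ i ∈ Finset.range M, γ ^ (M - 1 - i) * etaFun M u γ (i + 1)
      = ∑ i ∈ Finset.range M,
          γ ^ (M - 1 - i) * (withBoundary M u (i + 1) - γ * withBoundary M u i) :=
        Finset.sum_congr rfl fun i hi => by rw [etaFun_succ hM u γ (Finset.mem_range.1 hi)]
    _ = withBoundary M u M - γ ^ M * withBoundary M u 0 := sum_range_pow_mul_sub _ _ _
    _ = 1 := by rw [hv0, hvM, mul_zero, sub_zero]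

lemma pow_mul_hFun_sq_le_of_etaFun_le {γ c : ℝ} {u : ℕ → ℝ} (hM : 2 ≤ M) (h0 : 0 ≤ γ)
    (h1 : γ < 1) (hu : u 1 ≤ c) (hη : ∀ i ∈ Set.Icc 1 M, etaFun M u γ i ≤ hFun M γ + c) :
    γ ^ (M - 1) * hFun M γ ^ 2 ≤ c := by
  set h := hFun M γ
  let slack : ℕ → ℝ := fun i => γ ^ (M - 1 - i) * (h + c - etaFun M u γ (i + 1))
  have hM0 : M ≠ 0 := by omega
  have hweights : (∑ i ∈ Finset.range M, γ ^ (M - 1 - i)) * h = 1 := by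
    rw [Finset.sum_range_reflect (fun i => γ ^ i)]
    exact geom_sum_mul_hFun (pow_lt_one₀ h0 h1 hM0).ne
  have hslack_nonneg : ∀ i ∈ Finset.range M, 0 ≤ slack i := fun i hi =>
    mul_nonneg (pow_nonneg h0 _)
      (sub_nonneg.2 (hη _ ⟨i.succ_pos, Finset.mem_range.1 hi⟩))
  have hslack_sum : (∑ i ∈ Finset.range M, slack i) * h = c := by
    simp only [slack, mul_sub, Finset.sum_sub_distrib, sum_pow_mul_etaFun hM, ← Finset.sum_mul]
    linear_combination (h + c) * hweights
  have hslack_zero : γ ^ (M - 1) * h ≤ slack 0 := by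
    have hη1 : etaFun M u γ 1 = u 1 := if_pos rfl
    refine mul_le_mul_of_nonneg_left ?_ (pow_nonneg h0 _)
    linarith
  calc γ ^ (M - 1) * h ^ 2 = γ ^ (M - 1) * h * h := by ring
    _ ≤ (∑ i ∈ Finset.range M, slack i) * h := by
      refine mul_le_mul_of_nonneg_right (hslack_zero.trans ?_) (hFun_pos hM0 h0 h1).le
      exact Finset.single_le_sum hslack_nonneg (Finset.mem_range.2 (by omega))
    _ = c := hslack_sum

end Increments

section Suprema

variable {d M : ℕ} {β γ : ℝ}

lemma etaFun_le_iSup (u : ℕ → ℝ) {i : ℕ} (hi : i ∈ Set.Icc 1 M) :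
    etaFun M u γ i ≤ ⨆ j : Set.Icc 1 M, etaFun M u γ j.1 :=
  le_ciSup (f := fun j : Set.Icc 1 M => etaFun M u γ j.1) (Set.finite_range _).bddAbove ⟨i, hi⟩

-- The point is that `etaFun M u γ i` is affine in `γ`.
lemma etaFun_le_max (hM : 2 ≤ M) (u : ℕ → ℝ) (hγ : γ ∈ Set.Icc 0 1) {i : ℕ}
    (hi : i ∈ Set.Icc 1 M) : etaFun M u γ i ≤ max (etaFun M u 0 i) (etaFun M u 1 i) := by
  obtain ⟨j, rfl⟩ := Nat.exists_eq_add_of_le' hi.1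
  simp only [etaFun_succ hM u _ hi.2]
  rcases le_total 0 (withBoundary M u j) with hv | hv
  · exact le_max_of_le_left (sub_le_sub_left (mul_le_mul_of_nonneg_right hγ.1 hv) _)
  · exact le_max_of_le_right (sub_le_sub_left (mul_le_mul_of_nonpos_right hγ.2 hv) _)

lemma bddAbove_range_PsiFun (hβ : 0 < β) (hM : 2 ≤ M) (u : ℕ → ℝ) :
    BddAbove (Set.range fun γ : Sset d β => PsiFun M u γ.1) := by
  have : Nonempty (Set.Icc 1 M) := ⟨⟨1, le_rfl, by omega⟩⟩
  refine ⟨max (⨆ i : Set.Icc 1 M, etaFun M u 0 i.1) (⨆ i : Set.Icc 1 M, etaFun M u 1 i.1), ?_⟩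
  rintro _ ⟨⟨γ, hγ⟩, rfl⟩
  obtain ⟨h0, h1⟩ := Sset_subset_Ioo hβ hγ
  calc PsiFun M u γ ≤ ⨆ i : Set.Icc 1 M, etaFun M u γ i.1 :=
        sub_le_self _ (hFun_pos (by omega) h0.le h1).le
    _ ≤ _ := ciSup_le fun i => (etaFun_le_max hM u ⟨h0.le, h1.le⟩ i.2).trans
        (max_le_max (etaFun_le_iSup u i.2) (etaFun_le_iSup u i.2))

lemma PsiFun_le_psiFun (hβ : 0 < β) (hM : 2 ≤ M) (u : ℕ → ℝ) (hγ : γ ∈ Sset d β) :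
    PsiFun M u γ ≤ psiFun d β M u :=
  (le_ciSup (bddAbove_range_PsiFun hβ hM u) ⟨γ, hγ⟩).trans (le_max_right _ _)

lemma etaFun_le_hFun_add_psiFun (hβ : 0 < β) (hM : 2 ≤ M) (u : ℕ → ℝ) (hγ : γ ∈ Sset d β)
    {i : ℕ} (hi : i ∈ Set.Icc 1 M) : etaFun M u γ i ≤ hFun M γ + psiFun d β M u :=
  (etaFun_le_iSup u hi).trans (sub_le_iff_le_add'.1 (PsiFun_le_psiFun hβ hM u hγ))

lemma pow_mul_hFun_sq_le_psiFun (hβ : 0 < β) (hM : 2 ≤ M) (u : ℕ → ℝ) (hγ : γ ∈ Sset d β) :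
    γ ^ (M - 1) * hFun M γ ^ 2 ≤ psiFun d β M u :=
  have hγ01 := Sset_subset_Ioo hβ hγ
  pow_mul_hFun_sq_le_of_etaFun_le hM hγ01.1.le hγ01.2 (le_max_left _ _)
    fun _ hi => etaFun_le_hFun_add_psiFun hβ hM u hγ hi

end Suprema

section GeometricProfile

variable {M : ℕ} {g γ : ℝ}

/-- The sequence `u i = 1 - g ^ (i - 1)` for `i ≥ 1`, the test point of the upper bound. The
truncated subtraction makes its irrelevant value at `0` equal to `0`. -/
noncomputable def geomProfile (g : ℝ) (i : ℕ) : ℝ := 1 - g ^ (i - 1)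

lemma geomProfile_mem_UM (M : ℕ) (h0 : 0 ≤ g) (h1 : g ≤ 1) : geomProfile g ∈ UM M :=
  ⟨by simp [geomProfile], sub_le_self _ (pow_nonneg h0 _), fun _ _ _ =>
    sub_le_sub_left (pow_le_pow_of_le_one h0 h1 (Nat.sub_le_sub_right (Nat.le_succ _) 1)) 1⟩

lemma etaFun_geomProfile_le (hγg : γ ≤ g) (h0 : 0 ≤ g) (h1 : γ ≤ 1) {i : ℕ}
    (hi : i ∈ Set.Icc 1 M) : etaFun M (geomProfile g) γ i ≤ 1 - γ + g ^ (M - 1) := by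
  have hpow : 0 ≤ g ^ (M - 1) := pow_nonneg h0 _
  have hstep (k : ℕ) : γ * g ^ k ≤ g ^ (k + 1) := by
    rw [pow_succ']
    exact mul_le_mul_of_nonneg_right hγg (pow_nonneg h0 k)
  unfold etaFun geomProfile
  split_ifs with hi1 hiM
  · simp only [Nat.sub_self, pow_zero, sub_self]
    linarith
  · obtain ⟨k, rfl⟩ : ∃ k, M = k + 2 := ⟨M - 2, by have := hi.1; omega⟩
    simp only [Nat.add_sub_cancel, Nat.reduceSubDiff]
    linarith [hstep k]
  · obtain ⟨k, rfl⟩ : ∃ k, i = k + 2 := ⟨i - 2, by have := hi.1; omega⟩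
    simp only [Nat.add_sub_cancel, Nat.reduceSubDiff]
    linarith [hstep k]

end GeometricProfile

section OptimalExponent

variable {d M : ℕ} {β : ℝ}

lemma geomProfile_gammaMax_mem_UM (M : ℕ) (hβ : 0 < β) : geomProfile (gammaMax d β) ∈ UM M :=
  geomProfile_mem_UM M (gammaMax_pos hβ).le (gammaMax_lt_one hβ).le

lemma psiFun_geomProfile_gammaMax_le (hβ : 0 < β) (hM : M ≠ 0) :
    psiFun d β M (geomProfile (gammaMax d β)) ≤ gammaMax d β ^ (M - 1) := by
  have hg : 0 ≤ gammaMax d β := (gammaMax_pos hβ).le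
  have : Nonempty (Set.Icc 1 M) := ⟨⟨1, le_rfl, Nat.one_le_iff_ne_zero.2 hM⟩⟩
  have : Nonempty (Sset d β) := ⟨⟨_, gammaMax_mem_Sset hβ⟩⟩
  refine max_le (by simpa [geomProfile] using pow_nonneg hg _) (ciSup_le ?_)
  rintro ⟨γ, hγ⟩
  obtain ⟨h0, h1⟩ := Sset_subset_Ioo hβ hγ
  refine sub_le_iff_le_add'.2 (ciSup_le fun i => ?_)
  calc etaFun M (geomProfile (gammaMax d β)) γ i.1 ≤ 1 - γ + gammaMax d β ^ (M - 1) :=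
        etaFun_geomProfile_le hγ.2 hg h1.le i.2
    _ ≤ hFun M γ + gammaMax d β ^ (M - 1) := by
        gcongr
        exact one_sub_le_hFun hM h0.le h1

lemma gammaMax_pow_mul_hFun_sq_mem_lowerBounds (hβ : 0 < β) (hM : 2 ≤ M) :
    gammaMax d β ^ (M - 1) * hFun M (gammaMax d β) ^ 2 ∈
      lowerBounds (psiFun d β M '' UM M) := by
  rintro _ ⟨u, -, rfl⟩
  exact pow_mul_hFun_sq_le_psiFun hβ hM u (gammaMax_mem_Sset hβ)

lemma gammaMax_pow_mul_hFun_sq_le_psiStar (hβ : 0 < β) (hM : 2 ≤ M) :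
    gammaMax d β ^ (M - 1) * hFun M (gammaMax d β) ^ 2 ≤ psiStar d β M :=
  le_csInf ⟨_, Set.mem_image_of_mem _ (geomProfile_gammaMax_mem_UM (d := d) M hβ)⟩
    (gammaMax_pow_mul_hFun_sq_mem_lowerBounds hβ hM)

lemma psiStar_le_gammaMax_pow (hβ : 0 < β) (hM : 2 ≤ M) :
    psiStar d β M ≤ gammaMax d β ^ (M - 1) :=
  (csInf_le ⟨_, gammaMax_pow_mul_hFun_sq_mem_lowerBounds hβ hM⟩
    (Set.mem_image_of_mem _ (geomProfile_gammaMax_mem_UM M hβ))).trans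
    (psiFun_geomProfile_gammaMax_le hβ (by omega))

end OptimalExponent

theorem stmt3 (d : ℕ) (hd : 1 ≤ d) (β : ℝ) (hβ : 0 < β) (M : ℕ) (hM2 : 2 ≤ M) :
    gammaMax d β ^ (M - 1) * (1 - gammaMax d β) ^ 2 / (1 - gammaMax d β ^ M) ^ 2
      ≤ psiStar d β M ∧
    psiStar d β M ≤ (M + 1) * gammaMax d β ^ (M - 1) / (1 - gammaMax d β) ^ 2 := by
  have hg0 : 0 < gammaMax d β := gammaMax_pos hβ
  have hg1 : 0 < 1 - gammaMax d β := sub_pos.2 (gammaMax_lt_one hβ)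
  constructor
  · rw [mul_div_assoc, ← div_pow]
    exact gammaMax_pow_mul_hFun_sq_le_psiStar hβ hM2
  · have hsq : (1 - gammaMax d β) ^ 2 ≤ 1 := pow_le_one₀ hg1.le (by linarith)
    have hM1 : (1 : ℝ) ≤ M + 1 := le_add_of_nonneg_left M.cast_nonneg
    calc psiStar d β M ≤ gammaMax d β ^ (M - 1) := psiStar_le_gammaMax_pow hβ hM2
      _ ≤ (M + 1) * gammaMax d β ^ (M - 1) := le_mul_of_one_le_left (by positivity) hM1
      _ ≤ (M + 1) * gammaMax d β ^ (M - 1) / (1 - gammaMax d β) ^ 2 :=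
        le_div_self (by positivity) (by positivity) hsq
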